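/- arXiv:1911.10577 — 5 statements merged into one kernel-verified Lean document; each statement's English description precedes it below -/
import Mathlib

section
/- Let R ⊆ S be an FCP ring extension. Then R ⊆ S is catenarian if and only if every subextension T ⊆ U (with T, U ∈ [R,S], T ⊆ U) is catenarian. -/
/-!
Two maximal chains from `T` to `U` become maximal chains from `⊥` to `⊤` on gluing to both of them
the same maximal chain from `⊥` to `T` and the same maximal chain from `U` to `⊤`; this adds the
same number to their lengths. The chains to be glued exist because finiteness of all chains makes
the order well founded in both directions.
-/

/-- A maximal chain of length `n` from `T` to `U`: each step is a covering. -/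
def IsMaxChainFromTo {α : Type*} [PartialOrder α] (T U : α) (n : ℕ)
    (c : Fin (n + 1) → α) : Prop :=
  c 0 = T ∧ c (Fin.last n) = U ∧ ∀ i : Fin n, c i.castSucc ⋖ c i.succ

/-- The subextension determined by `T ≤ U` is catenarian: all maximal chains from
`T` to `U` have the same length. -/
def IsCatenarianFromTo {α : Type*} [PartialOrder α] (T U : α) : Prop :=
  ∀ (n m : ℕ) (c : Fin (n + 1) → α) (d : Fin (m + 1) → α),
    IsMaxChainFromTo T U n c → IsMaxChainFromTo T U m d → n = m

/-- The extension `R ⊆ S` has FCP: every chain of `R`-subalgebras of `S` is finite. -/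
def IsFCPExt (R S : Type*) [CommRing R] [CommRing S] [Algebra R S] : Prop :=
  ∀ C : Set (Subalgebra R S), IsChain (· ≤ ·) C → C.Finite

/-- The extension `R ⊆ S` is catenarian. -/
def IsCatenarianExt (R S : Type*) [CommRing R] [CommRing S] [Algebra R S] : Prop :=
  IsCatenarianFromTo (⊥ : Subalgebra R S) ⊤

/-- The length `ℓ[T,U]`: the supremum of lengths of chains from `T` to `U`. -/
noncomputable def extLength {α : Type*} [PartialOrder α] (T U : α) : ℕ :=
  sSup {n | ∃ c : Fin (n + 1) → α, StrictMono c ∧ c 0 = T ∧ c (Fin.last n) = U}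

lemma wellFoundedLT_of_forall_isChain_finite {α : Type*} [Preorder α]
    (h : ∀ C : Set α, IsChain (· ≤ ·) C → C.Finite) : WellFoundedLT α := by
  refine ⟨RelEmbedding.wellFounded_iff_isEmpty.2 ⟨fun f => ?_⟩⟩
  have hf : StrictAnti f := fun _ _ hab => f.map_rel_iff.2 hab
  exact Set.infinite_range_of_injective f.injective (h _ hf.antitone.isChain_range)

lemma wellFoundedGT_of_forall_isChain_finite {α : Type*} [Preorder α]
    (h : ∀ C : Set α, IsChain (· ≤ ·) C → C.Finite) : WellFoundedGT α :=
  have : WellFoundedLT αᵒᵈ := wellFoundedLT_of_forall_isChain_finite fun C hC => h C hC.symm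
  (wellFoundedLT_dual_iff α).1 this

section PartialOrder

variable {α : Type*} [PartialOrder α]

lemma exists_isMaxChainFromTo [WellFoundedLT α] [WellFoundedGT α] {T U : α} (h : T ≤ U) :
    ∃ n c, IsMaxChainFromTo T U n c := by
  obtain ⟨a, ha_zero, n, ha_last, ha_covBy⟩ :=
    exists_covBy_seq_of_wellFoundedLT_wellFoundedGT_of_le h
  exact ⟨n, fun i => a i, ha_zero, ha_last, fun i => ha_covBy i i.isLt⟩

lemma IsMaxChainFromTo.exists_append {T U V : α} {n m : ℕ} {c : Fin (n + 1) → α}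
    {d : Fin (m + 1) → α} (hc : IsMaxChainFromTo T U n c) (hd : IsMaxChainFromTo U V m d) :
    ∃ e, IsMaxChainFromTo T V (n + m) e := by
  obtain ⟨hc_zero, hc_last, hc_covBy⟩ := hc
  obtain ⟨hd_zero, hd_last, hd_covBy⟩ := hd
  let p : RelSeries {(a, b) : α × α | a ⋖ b} := ⟨n, c, hc_covBy⟩
  let q : RelSeries {(a, b) : α × α | a ⋖ b} := ⟨m, d, hd_covBy⟩
  have hpq : p.last = q.head := hc_last.trans hd_zero.symm
  exact ⟨p.smash q hpq, (RelSeries.head_smash hpq).trans hc_zero,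
    (RelSeries.last_smash hpq).trans hd_last, (p.smash q hpq).step⟩

lemma IsCatenarianFromTo.mono [WellFoundedLT α] [WellFoundedGT α] {T T' U U' : α}
    (h : IsCatenarianFromTo T' U') (hT : T' ≤ T) (hU : U ≤ U') : IsCatenarianFromTo T U := by
  intro n m c d hc hd
  obtain ⟨a, p, hp⟩ := exists_isMaxChainFromTo hT
  obtain ⟨b, q, hq⟩ := exists_isMaxChainFromTo hU
  have extend {k : ℕ} {e : Fin (k + 1) → α} (he : IsMaxChainFromTo T U k e) :
      ∃ e', IsMaxChainFromTo T' U' (a + k + b) e' :=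
    have ⟨_, hpe⟩ := hp.exists_append he
    hpe.exists_append hq
  obtain ⟨c', hc'⟩ := extend hc
  obtain ⟨d', hd'⟩ := extend hd
  have length_eq : a + n + b = a + m + b := h _ _ c' d' hc' hd'
  omega

theorem stmt_0_general [BoundedOrder α] (hchain : ∀ C : Set α, IsChain (· ≤ ·) C → C.Finite) :
    IsCatenarianFromTo (⊥ : α) ⊤ ↔ ∀ T U : α, T ≤ U → IsCatenarianFromTo T U :=
  have := wellFoundedLT_of_forall_isChain_finite hchain
  have := wellFoundedGT_of_forall_isChain_finite hchain
  ⟨fun h _ _ _ => h.mono bot_le le_top, fun h => h ⊥ ⊤ bot_le⟩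

end PartialOrder

/-- An FCP ring extension `R ⊆ S` is catenarian iff every subextension
`T ⊆ U` (with `T, U ∈ [R,S]`) is catenarian. -/
theorem stmt_0 {R S : Type*} [CommRing R] [CommRing S] [Algebra R S]
    (hinj : Function.Injective (algebraMap R S)) (hFCP : IsFCPExt R S) :
    IsCatenarianExt R S ↔
      ∀ T U : Subalgebra R S, T ≤ U → IsCatenarianFromTo T U :=
  stmt_0_general hFCP
end

section
/- Let R ⊆ S be an FCP ring extension. The following statements are equivalent: (1) R ⊆ S is catenarian; (2) for each ideal I of S which is contained in R (an ideal shared by R and S), the extension R/I ⊆ S/I is catenarian; (3) there exists an ideal I of S contained in R such that R/I ⊆ S/I is catenarian. -/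
theorem IsMaxChainFromTo.map {α β : Type*} [PartialOrder α] [PartialOrder β] (e : α ≃o β)
    {T U : α} {n : ℕ} {c : Fin (n + 1) → α} (hc : IsMaxChainFromTo T U n c) :
    IsMaxChainFromTo (e T) (e U) n (e ∘ c) := by
  obtain ⟨hfirst, hlast, hcov⟩ := hc
  exact ⟨congrArg e hfirst, congrArg e hlast, fun i ↦ (apply_covBy_apply_iff e).2 (hcov i)⟩

theorem IsCatenarianFromTo.of_orderIso {α β : Type*} [PartialOrder α] [PartialOrder β]
    (e : α ≃o β) {T U : α} (h : IsCatenarianFromTo (e T) (e U)) : IsCatenarianFromTo T U :=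
  fun n m _ _ hc hd ↦ h n m _ _ (hc.map e) (hd.map e)

theorem isCatenarianFromTo_apply_iff {α β : Type*} [PartialOrder α] [PartialOrder β]
    (e : α ≃o β) {T U : α} : IsCatenarianFromTo (e T) (e U) ↔ IsCatenarianFromTo T U :=
  ⟨.of_orderIso e, fun h ↦ .of_orderIso e.symm (by simpa only [e.symm_apply_apply] using h)⟩

theorem isCatenarianExt_congr {R S R' S' : Type*} [CommRing R] [CommRing S] [Algebra R S]
    [CommRing R'] [CommRing S'] [Algebra R' S'] (e : Subalgebra R S ≃o Subalgebra R' S') :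
    IsCatenarianExt R S ↔ IsCatenarianExt R' S' := by
  have h := isCatenarianFromTo_apply_iff e (T := ⊥) (U := ⊤)
  rw [e.map_bot, e.map_top] at h
  exact h.symm

/-- The correspondence theorem for subalgebras: if the kernel of a surjective homomorphism
`f : A →ₐ[R] B` consists of scalars, then the subalgebras of `A` and those of `B` are matched by
image and preimage under `f`. -/
def subalgebraMapOrderIso {R A B : Type*} [CommSemiring R] [Ring A] [Algebra R A] [Ring B]
    [Algebra R B] (f : A →ₐ[R] B) (hf : Function.Surjective f)
    (hker : f ⁻¹' {0} ⊆ Set.range (algebraMap R A)) : Subalgebra R A ≃o Subalgebra R B :=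
  have comap_map (C : Subalgebra R A) : (C.map f).comap f = C :=
    Subalgebra.comap_map_eq_self (hker.trans C.range_le)
  { toFun := Subalgebra.map f
    invFun := Subalgebra.comap f
    left_inv := comap_map
    right_inv := Subalgebra.map_comap_eq_self_of_surjective hf
    map_rel_iff' := fun {C D} ↦ by
      change C.map f ≤ D.map f ↔ C ≤ D
      rw [Subalgebra.map_le, comap_map] }

/-- Restriction of scalars along a surjective structure map `R → R'` identifies the `R'`-subalgebras
of `A` with its `R`-subalgebras: the underlying sets are the same. -/
def subalgebraRestrictScalarsOrderIso (R R' A : Type*) [CommSemiring R] [CommSemiring R']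
    [Semiring A] [Algebra R R'] [Algebra R' A] [Algebra R A] [IsScalarTower R R' A]
    (h : Function.Surjective (algebraMap R R')) : Subalgebra R' A ≃o Subalgebra R A where
  toFun := Subalgebra.restrictScalars R
  invFun C :=
    { C with
      algebraMap_mem' := h.forall.2 fun r ↦ by
        rw [← IsScalarTower.algebraMap_apply]
        exact C.algebraMap_mem r }
  left_inv _ := rfl
  right_inv _ := rfl
  map_rel_iff' := Iff.rfl

theorem isCatenarianExt_quotient_iff {R S : Type*} [CommRing R] [CommRing S] [Algebra R S]
    (I : Ideal S) (hI : (I : Set S) ⊆ Set.range (algebraMap R S)) :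
    letI : Algebra (R ⧸ I.comap (algebraMap R S)) (S ⧸ I) :=
      (Ideal.quotientMap I (algebraMap R S) le_rfl).toAlgebra
    IsCatenarianExt (R ⧸ I.comap (algebraMap R S)) (S ⧸ I) ↔ IsCatenarianExt R S := by
  let : Algebra (R ⧸ I.comap (algebraMap R S)) (S ⧸ I) :=
    (Ideal.quotientMap I (algebraMap R S) le_rfl).toAlgebra
  have : IsScalarTower R (R ⧸ I.comap (algebraMap R S)) (S ⧸ I) := .of_algebraMap_eq fun _ ↦ rfl
  have hker : Ideal.Quotient.mkₐ R I ⁻¹' {0} ⊆ Set.range (algebraMap R S) :=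
    fun _ hs ↦ hI (Ideal.Quotient.eq_zero_iff_mem.1 hs)
  calc
    IsCatenarianExt (R ⧸ I.comap (algebraMap R S)) (S ⧸ I) ↔ IsCatenarianExt R (S ⧸ I) :=
      isCatenarianExt_congr
        (subalgebraRestrictScalarsOrderIso R _ (S ⧸ I) Ideal.Quotient.mk_surjective)
    _ ↔ IsCatenarianExt R S :=
      (isCatenarianExt_congr
        (subalgebraMapOrderIso _ (Ideal.Quotient.mkₐ_surjective R I) hker)).symm

theorem stmt_2_general {R S : Type*} [CommRing R] [CommRing S] [Algebra R S] :
    List.TFAE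
      [ IsCatenarianExt R S,
        ∀ I : Ideal S, (I : Set S) ⊆ Set.range (algebraMap R S) →
          letI : Algebra (R ⧸ I.comap (algebraMap R S)) (S ⧸ I) :=
            (Ideal.quotientMap I (algebraMap R S) le_rfl).toAlgebra
          IsCatenarianExt (R ⧸ I.comap (algebraMap R S)) (S ⧸ I),
        ∃ I : Ideal S, (I : Set S) ⊆ Set.range (algebraMap R S) ∧
          letI : Algebra (R ⧸ I.comap (algebraMap R S)) (S ⧸ I) :=
            (Ideal.quotientMap I (algebraMap R S) le_rfl).toAlgebra
          IsCatenarianExt (R ⧸ I.comap (algebraMap R S)) (S ⧸ I) ] := by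
  tfae_have 1 → 2 := fun h I hI ↦ (isCatenarianExt_quotient_iff I hI).2 h
  tfae_have 2 → 3 := fun h ↦
    have bot_subset_range : ((⊥ : Ideal S) : Set S) ⊆ Set.range (algebraMap R S) :=
      Set.singleton_subset_iff.2 ⟨0, map_zero _⟩
    ⟨⊥, bot_subset_range, h ⊥ bot_subset_range⟩
  tfae_have 3 → 1 := fun ⟨I, hI, h⟩ ↦ (isCatenarianExt_quotient_iff I hI).1 h
  tfae_finish

/-- For an FCP extension `R ⊆ S`, the following are equivalent:
(1) `R ⊆ S` is catenarian; (2) `R/I ⊆ S/I` is catenarian for every ideal `I` of `S`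
shared by `R` and `S`; (3) `R/I ⊆ S/I` is catenarian for some such ideal. -/
theorem stmt_2 {R S : Type*} [CommRing R] [CommRing S] [Algebra R S]
    (hinj : Function.Injective (algebraMap R S)) (hFCP : IsFCPExt R S) :
    List.TFAE
      [ IsCatenarianExt R S,
        ∀ I : Ideal S, (I : Set S) ⊆ Set.range (algebraMap R S) →
          letI : Algebra (R ⧸ I.comap (algebraMap R S)) (S ⧸ I) :=
            (Ideal.quotientMap I (algebraMap R S) le_rfl).toAlgebra
          IsCatenarianExt (R ⧸ I.comap (algebraMap R S)) (S ⧸ I),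
        ∃ I : Ideal S, (I : Set S) ⊆ Set.range (algebraMap R S) ∧
          letI : Algebra (R ⧸ I.comap (algebraMap R S)) (S ⧸ I) :=
            (Ideal.quotientMap I (algebraMap R S) le_rfl).toAlgebra
          IsCatenarianExt (R ⧸ I.comap (algebraMap R S)) (S ⧸ I) ] :=
  stmt_2_general
end

section
/- Let R ⊆ S be an FCP ring extension which is Prüfer, i.e., for every T ∈ [R,S] the inclusion R → T is a flat epimorphism (T is flat as an R-module and R → T is an epimorphism in the category of commutative rings). Then R ⊆ S is catenarian. -/
open TensorProduct

lemma isCatenarianFromTo_of_isModularLattice {α : Type*} [Lattice α] [IsModularLattice α]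
    (x y : α) : IsCatenarianFromTo x y := by
  rintro n m c d ⟨hc_head, hc_last, hc⟩ ⟨hd_head, hd_last, hd⟩
  let s : CompositionSeries α := ⟨n, c, hc⟩
  let t : CompositionSeries α := ⟨m, d, hd⟩
  exact (CompositionSeries.jordan_holder s t (hc_head.trans hd_head.symm)
    (hc_last.trans hd_last.symm)).length_eq

lemma ideal_map_inf_eq_top_iff {R A : Type*} [CommSemiring R] [CommSemiring A] {f : R →+* A}
    {I J : Ideal R} : (I ⊓ J).map f = ⊤ ↔ I.map f = ⊤ ∧ J.map f = ⊤ := by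
  refine ⟨fun h ↦ ⟨top_le_iff.mp ?_, top_le_iff.mp ?_⟩, fun ⟨hI, hJ⟩ ↦ top_le_iff.mp ?_⟩
  · exact h.ge.trans (Ideal.map_mono inf_le_left)
  · exact h.ge.trans (Ideal.map_mono inf_le_right)
  · calc
      ⊤ = (I * J).map f := by rw [Ideal.map_mul, hI, hJ, Ideal.top_mul]
      _ ≤ (I ⊓ J).map f := Ideal.map_mono Ideal.mul_le_inf

section FlatEpi

variable {R A : Type*} [CommRing R]

lemma subsingleton_tensorProduct_quotient_of_one_mem [Ring A] [Algebra R A] [Algebra.IsEpi R A]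
    {N : Submodule R A} (hN : 1 ∈ N) : Subsingleton (A ⊗[R] (A ⧸ N)) := by
  refine subsingleton_of_forall_eq 0 fun x ↦ ?_
  induction x with
  | zero => rfl
  | add x y hx hy => rw [hx, hy, add_zero]
  | tmul a q =>
    obtain ⟨b, rfl⟩ := N.mkQ_surjective q
    have hab : a ⊗ₜ[R] b = (a * b) ⊗ₜ[R] (1 : A) :=
      Algebra.IsEpi.injective_lift_mul (by simp)
    have h_one : N.mkQ 1 = 0 := (Submodule.Quotient.mk_eq_zero N).mpr hN
    calc
      a ⊗ₜ[R] N.mkQ b = N.mkQ.lTensor A (a ⊗ₜ b) := rfl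
      _ = (a * b) ⊗ₜ[R] N.mkQ 1 := by rw [hab, LinearMap.lTensor_tmul]
      _ = 0 := by rw [h_one, tmul_zero]

variable [CommRing A] [Algebra R A] [Module.Flat R A]

lemma map_torsionOf_eq_top_of_subsingleton_tensorProduct {M : Type*} [AddCommGroup M] [Module R M]
    [Subsingleton (A ⊗[R] M)] (m : M) :
    (Ideal.torsionOf R M m).map (algebraMap R A) = ⊤ := by
  let i : (R ⧸ Ideal.torsionOf R M m) →ₗ[R] M :=
    (R ∙ m).subtype ∘ₗ (Ideal.quotTorsionOfEquivSpanSingleton R M m).toLinearMap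
  have hi : Function.Injective i :=
    (R ∙ m).subtype_injective.comp (Ideal.quotTorsionOfEquivSpanSingleton R M m).injective
  have : Subsingleton (A ⊗[R] (R ⧸ Ideal.torsionOf R M m)) :=
    (Module.Flat.lTensor_preserves_injective_linearMap (M := A) i hi).subsingleton
  rw [← Ideal.Quotient.subsingleton_iff]
  exact (Algebra.TensorProduct.quotIdealMapEquivTensorQuot A
    (Ideal.torsionOf R M m)).toEquiv.subsingleton

lemma map_colon_singleton_eq_top_of_one_mem [Algebra.IsEpi R A] {N : Submodule R A} (hN : 1 ∈ N)
    (a : A) : (N.colon {a}).map (algebraMap R A) = ⊤ := by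
  have := subsingleton_tensorProduct_quotient_of_one_mem hN
  have hcolon : N.colon {a} = Ideal.torsionOf R (A ⧸ N) (N.mkQ a) := by
    ext r
    rw [Submodule.mem_colon_singleton, Ideal.mem_torsionOf_iff, ← map_smul, Submodule.mkQ_apply,
      Submodule.Quotient.mk_eq_zero]
  rw [hcolon]
  exact map_torsionOf_eq_top_of_subsingleton_tensorProduct _

end FlatEpi

section DenominatorHull

variable {R S : Type*} (A : Type*) [CommSemiring R] [CommSemiring A] [Algebra R A] [Semiring S]
  [Algebra R S] {U V : Subalgebra R S}

/-- The elements of `S` whose ideal of denominators with respect to `U` extends to the unit ideal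
of `A`. When `A` is a flat epimorphism of `R` mapping to `S`, this computes the subalgebra
generated by `U` and the image of `A`. -/
def denominatorHull (U : Subalgebra R S) : Subalgebra R S where
  carrier := {y | (U.toSubmodule.colon {y}).map (algebraMap R A) = ⊤}
  algebraMap_mem' r := by
    have : U.toSubmodule.colon {algebraMap R S r} = ⊤ := by simp
    simp only [Set.mem_ofPred_eq, this, Ideal.map_top]
  add_mem' {x y} hx hy := by
    refine top_le_iff.mp ((ideal_map_inf_eq_top_iff.mpr ⟨hx, hy⟩).ge.trans (Ideal.map_mono ?_))
    rintro r ⟨hrx, hry⟩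
    rw [SetLike.mem_coe, Submodule.mem_colon_singleton] at hrx hry
    rw [Submodule.mem_colon_singleton, smul_add]
    exact add_mem hrx hry
  mul_mem' {x y} hx hy := by
    have hmap : (U.toSubmodule.colon {x} * U.toSubmodule.colon {y}).map (algebraMap R A) = ⊤ := by
      rw [Ideal.map_mul, hx, hy, Ideal.top_mul]
    refine top_le_iff.mp (hmap.ge.trans (Ideal.map_mono (Ideal.mul_le.mpr fun r hr s hs ↦ ?_)))
    rw [Submodule.mem_colon_singleton, Subalgebra.mem_toSubmodule] at hr hs ⊢
    rw [← smul_mul_smul_comm]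
    exact mul_mem hr hs

namespace denominatorHull

variable {A}

lemma mem_iff {y : S} :
    y ∈ denominatorHull A U ↔ (U.toSubmodule.colon {y}).map (algebraMap R A) = ⊤ :=
  Iff.rfl

variable (A)

lemma le : U ≤ denominatorHull A U := by
  intro y hy
  have : U.toSubmodule.colon {y} = ⊤ := by simpa using hy
  rw [mem_iff, this, Ideal.map_top]

lemma mono (h : U ≤ V) : denominatorHull A U ≤ denominatorHull A V := fun _ hy ↦
  top_le_iff.mp ((mem_iff.mp hy).ge.trans (Ideal.map_mono (Submodule.colon_mono h subset_rfl)))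

lemma inf : denominatorHull A (U ⊓ V) = denominatorHull A U ⊓ denominatorHull A V := by
  ext y
  rw [Algebra.mem_inf, mem_iff, mem_iff, mem_iff, Algebra.inf_toSubmodule, Submodule.inf_colon,
    ideal_map_inf_eq_top_iff]

variable {A}

lemma le_of_range_le {f : A →ₐ[R] S} (hf : f.range ≤ U) : denominatorHull A U ≤ U := by
  intro y hy
  have hmul : ∀ a ∈ (U.toSubmodule.colon {y}).map (algebraMap R A), f a * y ∈ U := by
    intro a ha
    induction ha using Submodule.span_induction with
    | mem a ha =>
      obtain ⟨r, hr, rfl⟩ := ha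
      rw [AlgHom.commutes, ← Algebra.smul_def]
      exact Submodule.mem_colon_singleton.mp hr
    | zero => simp
    | add a b _ _ ha hb => simpa [add_mul] using add_mem ha hb
    | smul b a _ ha => simpa [mul_assoc] using mul_mem (hf ⟨b, rfl⟩) ha
  simpa using hmul 1 (mem_iff.mp hy ▸ Submodule.mem_top)

end denominatorHull

end DenominatorHull

section Join

variable {R A S : Type*} [CommRing R] [CommRing A] [Algebra R A] [Module.Flat R A]
  [Algebra.IsEpi R A]

lemma range_le_denominatorHull [Semiring S] [Algebra R S] (f : A →ₐ[R] S) (U : Subalgebra R S) :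
    f.range ≤ denominatorHull A U := by
  rintro _ ⟨a, rfl⟩
  have hcolon : U.toSubmodule.colon {f a} = (U.comap f).toSubmodule.colon {a} := by
    ext r
    simp
  rw [denominatorHull.mem_iff]
  exact hcolon ▸ map_colon_singleton_eq_top_of_one_mem (one_mem (U.comap f)) a

theorem range_sup_eq_denominatorHull [Semiring S] [Algebra R S] (f : A →ₐ[R] S)
    (U : Subalgebra R S) : f.range ⊔ U = denominatorHull A U :=
  le_antisymm (sup_le (range_le_denominatorHull f U) (denominatorHull.le A))
    ((denominatorHull.mono A le_sup_right).trans (denominatorHull.le_of_range_le le_sup_left))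

theorem range_sup_inf_left [Semiring S] [Algebra R S] (f : A →ₐ[R] S) (U V : Subalgebra R S) :
    f.range ⊔ U ⊓ V = (f.range ⊔ U) ⊓ (f.range ⊔ V) := by
  simp only [range_sup_eq_denominatorHull, denominatorHull.inf]

end Join

theorem isModularLattice_subalgebra_of_flat_of_isEpi {R S : Type*} [CommRing R] [CommRing S]
    [Algebra R S] (hflat : ∀ T : Subalgebra R S, Module.Flat R T)
    (hepi : ∀ T : Subalgebra R S, Algebra.IsEpi R T) : IsModularLattice (Subalgebra R S) where
  sup_inf_le_assoc_of_le {T} U {V} hTV := by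
    have := hflat T
    have := hepi T
    have hdistrib := range_sup_inf_left T.val U V
    rw [Subalgebra.range_val, sup_eq_right.mpr hTV] at hdistrib
    exact hdistrib.ge

theorem stmt_5_general {R S : Type*} [CommRing R] [CommRing S] [Algebra R S]
    (hflat : ∀ T : Subalgebra R S, Module.Flat R T)
    (hepi : ∀ T : Subalgebra R S, Algebra.IsEpi R T) : IsCatenarianExt R S :=
  have := isModularLattice_subalgebra_of_flat_of_isEpi hflat hepi
  isCatenarianFromTo_of_isModularLattice ⊥ ⊤

/-- A Prüfer FCP extension (every `T ∈ [R,S]` is flat over `R` and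
`R → T` is an epimorphism of commutative rings) is catenarian. -/
theorem stmt_5 {R S : Type u} [CommRing R] [CommRing S] [Algebra R S]
    (hinj : Function.Injective (algebraMap R S)) (hFCP : IsFCPExt R S)
    (hflat : ∀ T : Subalgebra R S, Module.Flat R T)
    (hepi : ∀ T : Subalgebra R S,
      CategoryTheory.Epi (CommRingCat.ofHom (algebraMap R T))) :
    IsCatenarianExt R S :=
  stmt_5_general hflat fun T ↦ CommRingCat.epi_iff_epi.mp (hepi T)
end

section
/- Let R ⊆ S be an FCP ring extension and let R̄ be the integral closure of R in S. Then R ⊆ S is catenarian if and only if R ⊆ R̄ is catenarian. -/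
/-!
Every minimal extension is either integral or integrally closed. An integrally closed step followed
by an integral one can be exchanged for an integral step followed by an integrally closed one, so
every maximal chain from `R` to `S` has the same length as one passing through `R̄`. Its part below
`R̄` has the length prescribed by the hypothesis. Above `R̄`, the descending chain condition forces
`R̄ ⊆ S` to be a Prüfer extension; intermediate rings are then locally comparable, which makes
`[R̄, S]` a modular lattice, and the Jordan–Hölder theorem applies. Conversely, two maximal chains
from `R` to `R̄` are compared by appending a common chain from `R̄` to `S`.

The exchange rests on local comparability as well: for `A ⊂ D` minimal integral and `A ⊂ B` minimal
integrally closed, the conductor `(A : D)` is a maximal ideal of `A`, and localizing there makes `A`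
equal to `B`, whereas localizing elsewhere makes it equal to `D`.
-/

open Polynomial

namespace Catenarian

section IntegralClosure

variable {R S : Type*} [CommRing R] [CommRing S] [Algebra R S] {A B : Subalgebra R S}

lemma isIntegral_of_le {x : S} (hAB : A ≤ B) (hx : IsIntegral A x) : IsIntegral B x := by
  algebraize [(Subalgebra.inclusion hAB).toRingHom]
  have : IsScalarTower A B S := .of_algebraMap_eq fun _ => rfl
  exact hx.tower_top

variable (R S) in
/-- Integral closure in `S` as a closure operator on the `R`-subalgebras of `S`. -/
def intClosure : ClosureOperator (Subalgebra R S) :=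
  .mk' (fun A => (integralClosure A S).restrictScalars R)
    (fun _ _ hAB _ => isIntegral_of_le hAB)
    (fun A x hx => isIntegral_algebraMap (R := A) (x := ⟨x, hx⟩))
    (fun A x hx => isIntegral_trans (R := A) (A := integralClosure A S) x hx)

lemma mem_intClosure {x : S} : x ∈ intClosure R S A ↔ IsIntegral A x := Iff.rfl

lemma intClosure_bot : intClosure R S ⊥ = integralClosure R S :=
  le_antisymm (fun x hx => isIntegral_trans (A := (⊥ : Subalgebra R S)) x hx)
    fun _ hx => mem_intClosure.2 hx.tower_top

lemma intClosure_eq_of_le_of_le (hAB : A ≤ B) (hB : B ≤ intClosure R S A) :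
    intClosure R S B = intClosure R S A :=
  le_antisymm ((intClosure R S).le_closure_iff.1 hB) ((intClosure R S).monotone hAB)

/-- `A` is integrally closed in `B`: the elements of `B` integral over `A` lie in `A`. -/
def IsIntClosedIn (A B : Subalgebra R S) : Prop := B ⊓ intClosure R S A ≤ A

lemma IsIntClosedIn.mem {x : S} (h : IsIntClosedIn A B) (hx : x ∈ B) (hxA : IsIntegral A x) :
    x ∈ A := h ⟨hx, hxA⟩

/-- `A ⊂ B` is a minimal extension and `A` is integrally closed in `B`. -/
structure IsMinimalIntClosed (A B : Subalgebra R S) : Prop where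
  covBy : A ⋖ B
  isIntClosedIn : IsIntClosedIn A B

/-- `A ⊂ B` is a minimal extension and `B` is integral over `A`. -/
structure IsMinimalIntegral (A B : Subalgebra R S) : Prop where
  covBy : A ⋖ B
  le_intClosure : B ≤ intClosure R S A

lemma isMinimalIntClosed_or_isMinimalIntegral_of_covBy (hAB : A ⋖ B) :
    IsMinimalIntClosed A B ∨ IsMinimalIntegral A B :=
  (hAB.eq_or_eq (le_inf hAB.le ((intClosure R S).le_closure A)) inf_le_left).imp
    (fun h => ⟨hAB, h.le⟩) fun h => ⟨hAB, inf_eq_left.1 h⟩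

lemma IsMinimalIntegral.intClosure_eq (h : IsMinimalIntegral A B) :
    intClosure R S B = intClosure R S A :=
  intClosure_eq_of_le_of_le h.covBy.le h.le_intClosure

lemma mem_adjoin_union_singleton_iff {x y : S} :
    y ∈ Algebra.adjoin R (A ∪ {x} : Set S) ↔ ∃ p : A[X], aeval x p = y := by
  rw [← Algebra.restrictScalars_adjoin, Subalgebra.mem_restrictScalars,
    Algebra.adjoin_singleton_eq_range_aeval, AlgHom.mem_range]

lemma self_mem_adjoin_union_singleton (x : S) : x ∈ Algebra.adjoin R (A ∪ {x} : Set S) :=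
  Algebra.subset_adjoin (.inr rfl)

lemma le_adjoin_union_singleton (x : S) : A ≤ Algebra.adjoin R (A ∪ {x} : Set S) :=
  fun _ hy => Algebra.subset_adjoin (.inl hy)

lemma adjoin_union_singleton_le {x : S} (hAB : A ≤ B) (hx : x ∈ B) :
    Algebra.adjoin R (A ∪ {x} : Set S) ≤ B :=
  Algebra.adjoin_le (Set.union_subset hAB (Set.singleton_subset_iff.2 hx))

end IntegralClosure

section Pruefer

variable {R S : Type*} [CommRing R] [CommRing S] [Algebra R S] {A B C : Subalgebra R S} {x : S}

/-- The conductor ideal `(A : x)` of all `u ∈ A` with `u x ∈ A`, as an `R`-submodule of `S`. -/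
def denominators (A : Subalgebra R S) (x : S) : Submodule R S :=
  Subalgebra.toSubmodule A ⊓ (Subalgebra.toSubmodule A).comap (LinearMap.mulRight R x)

/-- `A ⊆ B` is a Prüfer extension, expressed elementwise: every `x ∈ B` satisfies
`(A : x) + (A : x) x = A`. -/
def IsPrueferIn (A B : Subalgebra R S) : Prop :=
  ∀ x ∈ B, ∃ u ∈ denominators A x, ∃ v ∈ denominators A x, u + v * x = 1

lemma IsPrueferIn.mono (h : IsPrueferIn A C) (hBC : B ≤ C) : IsPrueferIn A B :=
  fun x hx => h x (hBC hx)

lemma coeff_mul_mem_of_natDegree_le (hA : IsIntClosedIn A B) (hAB : A ≤ B) (hx : x ∈ B)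
    {q : A[X]} (hq : aeval x q = 0) {d : ℕ} (hd : q.natDegree ≤ d) :
    (q.coeff d : S) * x ∈ A := by
  rcases hd.lt_or_eq with hlt | rfl
  · simp [coeff_eq_zero_of_natDegree_lt hlt]
  · exact hA.mem (B.mul_mem (hAB (q.coeff _).2) hx) (isIntegral_leadingCoeff_smul q x hq)

lemma coeff_mem_of_aeval_eq_zero (hA : IsIntClosedIn A B) (hAB : A ≤ B) (hx : x ∈ B) (i : ℕ)
    (q : A[X]) (hq : aeval x q = 0) :
    (q.coeff i : S) ∈ denominators A x ⊔ (denominators A x).map (LinearMap.mulRight R x) := by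
  -- If `a` is the leading coefficient of `q`, then `a x` is integral over `A`, hence lies in `A`.
  -- So `q = a Xᵈ⁺¹ + b Xᵈ + ⋯` may be replaced by `(a x + b) Xᵈ + ⋯`, which alters the
  -- coefficients by `a ∈ (A : x)` and `a x` only.
  set J := denominators A x ⊔ (denominators A x).map (LinearMap.mulRight R x)
  obtain ⟨d, hd⟩ : ∃ d, q.natDegree ≤ d := ⟨_, le_rfl⟩
  induction d generalizing q with
  | zero =>
    rw [eq_C_of_natDegree_le_zero hd, aeval_C] at hq
    rw [eq_C_of_natDegree_le_zero hd, coeff_C, apply_ite Subtype.val]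
    split_ifs
    · exact (show ((q.coeff 0 : A) : S) = 0 from hq) ▸ J.zero_mem
    · exact J.zero_mem
  | succ d ih =>
    set a := q.coeff (d + 1) with ha
    have hax : (a : S) * x ∈ A := coeff_mul_mem_of_natDegree_le hA hAB hx hq hd
    have ha_mem : (a : S) ∈ J := Submodule.mem_sup_left ⟨a.2, hax⟩
    have hax_mem : (a : S) * x ∈ J :=
      Submodule.mem_sup_right (Submodule.mem_map_of_mem (f := LinearMap.mulRight R x) ⟨a.2, hax⟩)
    let q' : A[X] := q - C a * X ^ (d + 1) + C ⟨a * x, hax⟩ * X ^ d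
    have hq'_root : aeval x q' = 0 := by
      simp only [q', map_add, map_sub, map_mul, aeval_C, hq, map_pow, aeval_X]
      change 0 - (a : S) * x ^ (d + 1) + ((a : S) * x) * x ^ d = 0
      ring
    have hq'_deg : q'.natDegree ≤ d := by
      refine natDegree_le_iff_coeff_eq_zero.2 fun N hN => ?_
      rcases eq_or_ne N (d + 1) with rfl | hN'
      · simp [q', coeff_X_pow, ha]
      · have : q.coeff N = 0 := coeff_eq_zero_of_natDegree_lt (by omega)
        simp [q', coeff_X_pow, hN', this, hN.ne']
    have hcoeff : (q.coeff i : S) =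
        q'.coeff i + (if i = d + 1 then (a : S) else 0) - if i = d then (a : S) * x else 0 := by
      simp only [q', coeff_add, coeff_sub, coeff_C_mul, coeff_X_pow]
      split_ifs <;> push_cast <;> ring
    rw [hcoeff]
    refine J.sub_mem (J.add_mem (ih q' hq'_root hq'_deg) ?_) ?_ <;> split_ifs
    exacts [ha_mem, J.zero_mem, hax_mem, J.zero_mem]

lemma exists_coeff_eq_one_of_wellFoundedLT [WellFoundedLT (Subalgebra R S)]
    (A : Subalgebra R S) (x : S) : ∃ q : A[X], aeval x q = 0 ∧ ∃ i, q.coeff i = 1 := by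
  -- As `A[x] ⊇ A[x²] ⊇ A[x⁴] ⊇ ⋯` is eventually constant, `x` is a root of some
  -- `X ^ 2 ^ k - p(X ^ 2 ^ (k + 1))`.
  have hanti : Antitone fun k : ℕ => Algebra.adjoin R (A ∪ {x ^ 2 ^ k} : Set S) := by
    refine antitone_nat_of_succ_le fun k =>
      adjoin_union_singleton_le (le_adjoin_union_singleton _) ?_
    rw [pow_succ, pow_mul]
    exact pow_mem (self_mem_adjoin_union_singleton _) _
  obtain ⟨k, hk⟩ := WellFoundedLT.antitone_chain_condition hanti
  obtain ⟨p, hp⟩ := mem_adjoin_union_singleton_iff.1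
    ((hk (k + 1) k.le_succ).le (self_mem_adjoin_union_singleton _))
  refine ⟨X ^ 2 ^ k - expand A (2 ^ (k + 1)) p, ?_, 2 ^ k, ?_⟩
  · rw [map_sub, expand_aeval, hp, map_pow, aeval_X, sub_self]
  · have hdvd : ¬ 2 ^ (k + 1) ∣ 2 ^ k := by simp [Nat.pow_dvd_pow_iff_le_right']
    rw [coeff_sub, coeff_X_pow_self, coeff_expand (by positivity), if_neg hdvd, sub_zero]

theorem IsIntClosedIn.isPrueferIn [WellFoundedLT (Subalgebra R S)] (hA : IsIntClosedIn A B)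
    (hAB : A ≤ B) : IsPrueferIn A B := by
  intro x hx
  obtain ⟨q, hq, i, hi⟩ := exists_coeff_eq_one_of_wellFoundedLT A x
  have hone : (1 : S) ∈ denominators A x ⊔ (denominators A x).map (LinearMap.mulRight R x) := by
    simpa [hi] using coeff_mem_of_aeval_eq_zero hA hAB hx i q hq
  obtain ⟨u, hu, _, ⟨v, hv, rfl⟩, huv⟩ := Submodule.mem_sup.1 hone
  exact ⟨u, hu, v, hv, huv⟩

lemma IsPrueferIn.mem_of_forall_mul_mem (h : IsPrueferIn A B) (F : Finset S)
    (hF : ∀ b ∈ F, b ∈ B) {y : S} (hy : ∀ r ∈ A, (∀ b ∈ F, r * b ∈ A) → r * y ∈ B) :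
    y ∈ B := by
  classical
  induction F using Finset.induction_on with
  | empty => simpa using hy 1 A.one_mem (by simp)
  | insert b F _ ih =>
    rw [Finset.forall_mem_insert] at hF
    refine ih hF.2 fun r hr hrF => ?_
    obtain ⟨u, hu, v, hv, huv⟩ := h b hF.1
    have hmul : ∀ w ∈ denominators A b, w * r * y ∈ B := fun w hw => by
      refine hy _ (A.mul_mem hw.1 hr) (Finset.forall_mem_insert _ _ _ |>.2 ⟨?_, fun c hc => ?_⟩)
      · rw [mul_right_comm]
        exact A.mul_mem hw.2 hr
      · rw [mul_assoc]
        exact A.mul_mem hw.1 (hrF c hc)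
    have : r * y = u * r * y + v * r * y * b := by linear_combination (-r * y) * huv
    rw [this]
    exact B.add_mem (hmul u hu) (B.mul_mem (hmul v hv) hF.1)

lemma isIntegral_smul_of_isIntegral_smul_coeff {A : Type*} [CommRing A] [Algebra A S] {p : S[X]}
    (hp : p.Monic) (hx : p.eval x = 0) {r : A}
    (hr : ∀ i < p.natDegree, IsIntegral A (r • p.coeff i)) : IsIntegral A (r • x) := by
  nontriviality S
  have hdeg : p.natDegree ≠ 0 := fun h0 => by simp [hp.natDegree_eq_zero.1 h0] at hx
  have hroot : (p.scaleRoots (algebraMap A S r)).eval (r • x) = 0 := by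
    have := scaleRoots_eval₂_mul (p := p) (RingHom.id S) x (algebraMap A S r)
    rwa [← eval, ← eval, hx, mul_zero, RingHom.id_apply, ← Algebra.smul_def] at this
  refine .of_aeval_monic_of_isIntegral_coeff ((monic_scaleRoots_iff _).2 hp)
    (by rwa [natDegree_scaleRoots]) (hroot ▸ isIntegral_zero) fun i => ?_
  rw [coeff_scaleRoots]
  rcases lt_trichotomy i p.natDegree with hi | rfl | hi
  · obtain ⟨k, hk⟩ := Nat.exists_eq_add_of_lt hi
    have : p.coeff i * algebraMap A S r ^ (p.natDegree - i) =
        (r • p.coeff i) * algebraMap A S r ^ k := by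
      rw [hk, Algebra.smul_def, show i + k + 1 - i = k + 1 by lia]
      ring
    rw [this]
    exact (hr i hi).mul (isIntegral_algebraMap.pow k)
  · simpa [hp.coeff_natDegree] using isIntegral_one
  · simpa [coeff_eq_zero_of_natDegree_lt hi] using isIntegral_zero

theorem IsPrueferIn.isIntClosedIn (hAB : A ≤ B) (hBC : B ≤ C) (h : IsPrueferIn A B)
    (hA : IsIntClosedIn A C) : IsIntClosedIn B C := by
  -- Every common denominator `r ∈ A` of the coefficients of an equation of `x` over `B` makes
  -- `r x` integral over `A`, and these `r` generate the unit ideal of `B`.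
  rintro x ⟨hxC, p, hp, hpx⟩
  have hcoeff : ∀ i, (p.map (algebraMap B S)).coeff i ∈ B := fun i => by simp
  refine h.mem_of_forall_mul_mem (p.map (algebraMap B S)).coeffs (fun b hb => ?_)
    fun r hr hrb => hAB (hA.mem (C.mul_mem (hBC (hAB hr)) hxC) ?_)
  · obtain ⟨i, -, rfl⟩ := mem_coeffs_iff.1 hb
    exact hcoeff i
  · refine isIntegral_smul_of_isIntegral_smul_coeff (A := A) (r := ⟨r, hr⟩) (hp.map _)
      (by rwa [eval_map]) fun i _ => ?_
    by_cases h0 : (p.map (algebraMap B S)).coeff i = 0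
    · rw [h0, smul_zero]
      exact isIntegral_zero
    · exact isIntegral_algebraMap (R := A) (x := ⟨_, hrb _ (coeff_mem_coeffs h0)⟩)

end Pruefer

section LocalComparability

variable {R S : Type*} [CommRing R] [CommRing S] [Algebra R S] {A T U V : Subalgebra R S} {x : S}

/-- `T` and `U` are locally comparable over `A`: in every localization of `A` at a prime ideal, one
of them contains the other. The two elements of `A` with sum `1` encode this without primes. -/
def LocallyComparable (A T U : Subalgebra R S) : Prop :=
  ∀ t ∈ T, ∀ u ∈ U, ∃ i ∈ A, ∃ j ∈ A, i + j = 1 ∧ i * u ∈ T ∧ j * t ∈ U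

namespace LocallyComparable

lemma symm (h : LocallyComparable A T U) : LocallyComparable A U T := fun u hu t ht =>
  let ⟨i, hi, j, hj, hij, hiu, hjt⟩ := h t ht u hu
  ⟨j, hj, i, hi, by rw [add_comm, hij], hjt, hiu⟩

lemma mul_mem_toSubmodule_sup (h : LocallyComparable A T U) {t u : S} (ht : t ∈ T) (hu : u ∈ U) :
    t * u ∈ T.toSubmodule ⊔ U.toSubmodule := by
  obtain ⟨i, -, j, -, hij, hiu, hjt⟩ := h t ht u hu
  have hsplit : t * u = t * (i * u) + j * t * u := by linear_combination (-t * u) * hij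
  exact hsplit ▸ Submodule.add_mem_sup (T.mul_mem ht hiu) (U.mul_mem hjt hu)

lemma toSubmodule_sup (h : LocallyComparable A T U) :
    (T ⊔ U).toSubmodule = T.toSubmodule ⊔ U.toSubmodule := by
  refine le_antisymm ?_ <|
    sup_le (show T ≤ T ⊔ U from le_sup_left) (show U ≤ T ⊔ U from le_sup_right)
  rw [← Subalgebra.mul_toSubmodule, Submodule.mul_le]
  exact fun t ht u hu => h.mul_mem_toSubmodule_sup ht hu

lemma exists_mul_mem_of_mem_sup (h : LocallyComparable A T U) (hT : A ≤ T) (hU : A ≤ U)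
    (hx : x ∈ T ⊔ U) : ∃ i ∈ A, ∃ j ∈ A, i + j = 1 ∧ i * x ∈ T ∧ j * x ∈ U := by
  rw [← Subalgebra.mem_toSubmodule, h.toSubmodule_sup, Submodule.mem_sup] at hx
  obtain ⟨t, ht, u, hu, rfl⟩ := hx
  obtain ⟨i, hi, j, hj, hij, hiu, hjt⟩ := h t ht u hu
  refine ⟨i, hi, j, hj, hij, ?_, ?_⟩ <;> rw [mul_add]
  exacts [T.add_mem (T.mul_mem (hT hi) ht) hiu, U.add_mem hjt (U.mul_mem (hU hj) hu)]

lemma sup_inf_le_sup_inf (h : LocallyComparable A T U) (hT : A ≤ T) (hU : A ≤ U) (hTV : T ≤ V) :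
    (T ⊔ U) ⊓ V ≤ T ⊔ U ⊓ V := by
  rintro x ⟨hx, hxV⟩
  obtain ⟨i, -, j, hj, hij, hix, hjx⟩ := h.exists_mul_mem_of_mem_sup hT hU hx
  have hmem : i * x + j * x ∈ T ⊔ U ⊓ V :=
    add_mem ((le_sup_left : T ≤ _) hix)
      ((le_sup_right : U ⊓ V ≤ _) ⟨hjx, V.mul_mem (hTV (hT hj)) hxV⟩)
  rwa [← add_mul, hij, one_mul] at hmem

lemma covBy_sup_of_inf_covBy (h : LocallyComparable A T U) (hT : A ≤ T) (hU : A ≤ U)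
    (hcov : T ⊓ U ⋖ U) : T ⋖ T ⊔ U := by
  refine ⟨left_lt_sup.2 fun hUT => hcov.ne (inf_eq_right.2 hUT), fun V hTV hV => ?_⟩
  have hle : V ≤ T ⊔ U ⊓ V :=
    (le_inf hV.le le_rfl).trans (h.sup_inf_le_sup_inf hT hU hTV.le)
  rcases hcov.eq_or_eq (le_inf inf_le_right (inf_le_left.trans hTV.le) : T ⊓ U ≤ U ⊓ V) inf_le_left
    with hUV | hUV
  · exact hTV.not_ge (hle.trans (sup_le le_rfl (hUV ▸ inf_le_left)))
  · exact hV.not_ge (sup_le hTV.le (inf_eq_left.1 hUV))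

end LocallyComparable

theorem IsPrueferIn.locallyComparable (hT : IsPrueferIn A T) (hU : IsPrueferIn A U)
    (hAT : A ≤ T) (hAU : A ≤ U) : LocallyComparable A T U := by
  intro x hx y hy
  obtain ⟨u, ⟨hu, huy⟩, v, ⟨hv, hvy⟩, huv⟩ := hU y hy
  obtain ⟨a, ⟨ha, hax⟩, b, ⟨hb, -⟩, hab⟩ := hT (v * x) (T.mul_mem (hAT hv) hx)
  refine ⟨1 - a + a * u, A.add_mem (A.sub_mem A.one_mem ha) (A.mul_mem ha hu),
    a * (v * y), A.mul_mem ha hvy, by linear_combination a * huv, ?_, ?_⟩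
  · have hsplit : (1 - a + a * u) * y = b * (v * y) * x + a * (u * y) := by
      linear_combination (-y) * hab
    rw [hsplit]
    exact T.add_mem (T.mul_mem (hAT (A.mul_mem hb hvy)) hx) (hAT (A.mul_mem ha huy))
  · have hsplit : a * (v * y) * x = a * (v * x) * y := by ring
    rw [hsplit]
    exact U.mul_mem (hAU hax) hy

theorem IsPrueferIn.isModularLattice_Ici {K : Subalgebra R S} (hK : IsPrueferIn K ⊤) :
    IsModularLattice (Set.Ici K) where
  sup_inf_le_assoc_of_le {T} U _ hTV :=
    ((hK.mono le_top).locallyComparable (hK.mono le_top) T.2 U.2).sup_inf_le_sup_inf T.2 U.2 hTV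

end LocalComparability

section MinimalIntegral

variable {R S : Type*} [CommRing R] [CommRing S] [Algebra R S] {A B D : Subalgebra R S}

/-- The conductor `(A : D)`, the largest ideal of `D` contained in `A`, as an ideal of `A`. -/
def conductorIdeal (A D : Subalgebra R S) : Ideal A where
  carrier := {r | ∀ y ∈ D, (r : S) * y ∈ A}
  add_mem' {r s} hr hs y hy := by
    rw [Subalgebra.coe_add, add_mul]
    exact A.add_mem (hr y hy) (hs y hy)
  zero_mem' y _ := by simp
  smul_mem' c r hr y hy := by
    rw [smul_eq_mul, Subalgebra.coe_mul, mul_assoc]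
    exact A.mul_mem c.2 (hr y hy)

lemma adjoin_union_singleton_eq_of_covBy {z : S} (hD : A ⋖ D) (hzD : z ∈ D) (hzA : z ∉ A) :
    Algebra.adjoin R (A ∪ {z} : Set S) = D :=
  (hD.eq_or_eq (le_adjoin_union_singleton z) (adjoin_union_singleton_le hD.le hzD)).resolve_left
    fun h => hzA (h ▸ self_mem_adjoin_union_singleton z)

lemma IsMinimalIntegral.exists_fg_submodule_eq (hD : IsMinimalIntegral A D) :
    ∃ P : Submodule A S, P.FG ∧ (P : Set S) = D := by
  obtain ⟨z, hzD, hzA⟩ := SetLike.exists_of_lt hD.covBy.lt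
  refine ⟨_, (mem_intClosure.1 (hD.le_intClosure hzD)).fg_adjoin_singleton, ?_⟩
  rw [← adjoin_union_singleton_eq_of_covBy hD.covBy hzD hzA, ← Algebra.restrictScalars_adjoin]
  rfl

lemma exists_eq_add_mul_of_covBy {r y w : S} (hD : A ⋖ D) (hr : r ∈ A) (hy : y ∈ D)
    (hry : r * y ∉ A) (hw : w ∈ D) : ∃ a ∈ A, ∃ d ∈ D, w = a + r * d := by
  have hryD : r * y ∈ D := D.mul_mem (hD.le hr) hy
  rw [← adjoin_union_singleton_eq_of_covBy hD hryD hry, mem_adjoin_union_singleton_iff] at hw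
  obtain ⟨p, rfl⟩ := hw
  have hq : aeval (r * y) p.divX ∈ D :=
    adjoin_union_singleton_le hD.le hryD (mem_adjoin_union_singleton_iff.2 ⟨_, rfl⟩)
  refine ⟨p.coeff 0, (p.coeff 0).2, _, D.mul_mem hy hq, ?_⟩
  conv_lhs => rw [← divX_mul_X_add p, map_add, map_mul, aeval_X, aeval_C]
  change _ + (p.coeff 0 : S) = _
  ring

theorem IsMinimalIntegral.isMaximal_conductorIdeal (hD : IsMinimalIntegral A D) :
    (conductorIdeal A D).IsMaximal := by
  refine Ideal.isMaximal_iff.2 ⟨fun h => ?_, fun J r hJ hr hrJ => ?_⟩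
  · exact hD.covBy.lt.not_ge fun y hy => by simpa using h y hy
  · obtain ⟨y, hy, hry⟩ : ∃ y ∈ D, (r : S) * y ∉ A := by
      by_contra! h
      exact hr h
    obtain ⟨P, hPfg, hPD⟩ := hD.exists_fg_submodule_eq
    have hmem : ∀ w, w ∈ P ↔ w ∈ D := fun w => Set.ext_iff.1 hPD w
    have hle : P ≤ 1 ⊔ Ideal.span {r} • P := fun w hw => by
      obtain ⟨a, ha, d, hd, rfl⟩ := exists_eq_add_mul_of_covBy hD.covBy r.2 hy hry ((hmem w).1 hw)
      exact Submodule.add_mem_sup (Submodule.mem_one.2 ⟨⟨a, ha⟩, rfl⟩)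
        (Submodule.smul_mem_smul (Ideal.mem_span_singleton_self r) ((hmem d).2 hd))
    obtain ⟨s, hs, hsP⟩ :=
      Submodule.exists_sub_one_mem_and_smul_le_of_fg_of_le_sup hPfg le_rfl hle
    have hsJ : s ∈ J := hJ fun w hw => by
      obtain ⟨c, hc⟩ := Submodule.mem_one.1
        (hsP (Submodule.smul_mem_pointwise_smul w s P ((hmem w).2 hw)))
      exact (show (s : S) * w = c from hc.symm) ▸ c.2
    simpa using J.sub_mem hsJ (Ideal.span_singleton_le_iff_mem J |>.2 hrJ hs)

theorem IsMinimalIntegral.locallyComparable (hD : IsMinimalIntegral A D) (hB : IsPrueferIn A B)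
    (hAB : A ≤ B) (hc : IsIntClosedIn A B) :
    LocallyComparable A D B := by
  -- The denominators of `b ∈ B` are not all in the maximal ideal `(A : D)`.
  intro d hd b hb
  obtain ⟨u, ⟨hu, hub⟩, v, ⟨hv, hvb⟩, huv⟩ := hB b hb
  have hnot : ⟨u, hu⟩ ∉ conductorIdeal A D ∨ ⟨v, hv⟩ ∉ conductorIdeal A D := by
    by_contra! h
    refine hD.covBy.lt.not_ge fun y hy => hc.mem ?_ (hD.le_intClosure hy)
    have hsplit : y = u * y + v * y * b := by linear_combination (-y) * huv
    exact hsplit ▸ B.add_mem (hAB (h.1 y hy)) (B.mul_mem (hAB (h.2 y hy)) hb)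
  obtain ⟨w, hw, hwb, hwM⟩ :
      ∃ w, ∃ hw : w ∈ A, w * b ∈ A ∧ ⟨w, hw⟩ ∉ conductorIdeal A D :=
    hnot.elim (fun h => ⟨u, hu, hub, h⟩) fun h => ⟨v, hv, hvb, h⟩
  obtain ⟨s, m, hm, hsm⟩ := hD.isMaximal_conductorIdeal.exists_inv hwM
  refine ⟨s * w, A.mul_mem s.2 hw, m, m.2, congrArg Subtype.val hsm, ?_, hAB (hm d hd)⟩
  rw [mul_assoc]
  exact hD.covBy.le (A.mul_mem s.2 hwb)

end MinimalIntegral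

section Exchange

variable {R S : Type*} [CommRing R] [CommRing S] [Algebra R S] {A B C D : Subalgebra R S}

lemma LocallyComparable.isIntClosedIn_sup (h : LocallyComparable A D B) (hAD : A ≤ D)
    (hAB : A ≤ B) (hc : IsIntClosedIn A B) (hDi : D ≤ intClosure R S A) :
    IsIntClosedIn D (D ⊔ B) := by
  rw [IsIntClosedIn, intClosure_eq_of_le_of_le hAD hDi]
  exact (h.sup_inf_le_sup_inf hAD hAB hDi).trans (sup_le le_rfl (hc.trans hAD))

variable [WellFoundedLT (Subalgebra R S)]

theorem IsMinimalIntClosed.sup (hB : IsMinimalIntClosed A B) (hD : IsMinimalIntegral A D) :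
    IsMinimalIntClosed D (D ⊔ B) ∧ IsMinimalIntegral B (D ⊔ B) := by
  have hAB := hB.covBy.le
  have hAD := hD.covBy.le
  have hloc : LocallyComparable A D B :=
    hD.locallyComparable (hB.isIntClosedIn.isPrueferIn hAB) hAB hB.isIntClosedIn
  have hinf : D ⊓ B = A :=
    le_antisymm (fun _ hx => hB.isIntClosedIn.mem hx.2 (hD.le_intClosure hx.1)) (le_inf hAD hAB)
  refine ⟨⟨hloc.covBy_sup_of_inf_covBy hAD hAB (hinf ▸ hB.covBy),
    hloc.isIntClosedIn_sup hAD hAB hB.isIntClosedIn hD.le_intClosure⟩, ?_, ?_⟩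
  · rw [sup_comm]
    exact hloc.symm.covBy_sup_of_inf_covBy hAB hAD (by rw [inf_comm, hinf]; exact hD.covBy)
  · exact sup_le (hD.le_intClosure.trans ((intClosure R S).monotone hAB))
      ((intClosure R S).le_closure B)

theorem IsMinimalIntClosed.exchange (hB : IsMinimalIntClosed A B) (hC : IsMinimalIntegral B C) :
    ∃ D, IsMinimalIntegral A D ∧ IsMinimalIntClosed D C := by
  have hlt : A < C ⊓ intClosure R S A := by
    refine lt_of_le_not_ge
      (le_inf (hB.covBy.le.trans hC.covBy.le) ((intClosure R S).le_closure A)) fun hAC => ?_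
    have hBC : IsIntClosedIn B C := (hB.isIntClosedIn.isPrueferIn hB.covBy.le).isIntClosedIn
      hB.covBy.le hC.covBy.le hAC
    exact hC.covBy.lt.not_ge fun x hx => hBC.mem hx (hC.le_intClosure hx)
  obtain ⟨D, hAD, hDle⟩ := exists_covBy_le_of_lt hlt
  have hD : IsMinimalIntegral A D := ⟨hAD, hDle.trans inf_le_right⟩
  obtain ⟨hDsup, hBsup⟩ := hB.sup hD
  have hsup : D ⊔ B = C := (hC.covBy.eq_or_eq hBsup.covBy.le
    (sup_le (hDle.trans inf_le_left) hC.covBy.le)).resolve_left hBsup.covBy.ne'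
  exact ⟨D, hD, hsup ▸ hDsup⟩

lemma IsMinimalIntClosed.intClosure_eq_self (hA : IsMinimalIntClosed A B)
    (hB : intClosure R S B = B) : intClosure R S A = A := by
  by_contra hne
  obtain ⟨D, hD, hDi⟩ :=
    exists_covBy_le_of_lt (((intClosure R S).le_closure A).lt_of_ne (Ne.symm hne))
  obtain ⟨-, hsup⟩ := hA.sup ⟨hD, hDi⟩
  exact hsup.covBy.lt.not_ge (hsup.le_intClosure.trans hB.le)

end Exchange

section MaxChain

variable {α : Type*}

/-- There is a maximal chain of length `n` from `T` to `U`. The inductive form of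
`∃ c, IsMaxChainFromTo T U n c`, see `hasMaxChain_iff`. -/
inductive HasMaxChain [PartialOrder α] : α → α → ℕ → Prop
  | refl (T : α) : HasMaxChain T T 0
  | cons {T V U : α} {n : ℕ} : T ⋖ V → HasMaxChain V U n → HasMaxChain T U (n + 1)

section PartialOrder

variable [PartialOrder α] {T U V : α} {n m : ℕ}

namespace HasMaxChain

lemma le (h : HasMaxChain T U n) : T ≤ U := by
  induction h with
  | refl => exact le_rfl
  | cons hTV _ ih => exact hTV.le.trans ih

lemma trans (hTV : HasMaxChain T V n) (hVU : HasMaxChain V U m) : HasMaxChain T U (n + m) := by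
  induction hTV with
  | refl => rwa [zero_add]
  | cons hT _ ih => exact Nat.add_right_comm .. ▸ cons hT (ih hVU)

end HasMaxChain

lemma hasMaxChain_iff : HasMaxChain T U n ↔ ∃ c, IsMaxChainFromTo T U n c := by
  constructor
  · intro h
    induction h with
    | refl T => exact ⟨fun _ => T, rfl, rfl, fun i => i.elim0⟩
    | @cons T _ _ _ hT _ ih =>
      obtain ⟨c, hc_zero, hc_last, hc⟩ := ih
      refine ⟨Fin.cons T c, rfl, by rwa [← Fin.succ_last, Fin.cons_succ], Fin.cases ?_ fun i => ?_⟩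
      · simpa [hc_zero] using hT
      · simpa [← Fin.succ_castSucc] using hc i
  · rintro ⟨c, rfl, rfl, hc⟩
    induction n with
    | zero => exact .refl _
    | succ n ih =>
      exact .cons (hc 0) (ih (fun i => c i.succ) fun i => hc i.succ)

lemma isCatenarianFromTo_iff :
    IsCatenarianFromTo T U ↔ ∀ n m, HasMaxChain T U n → HasMaxChain T U m → n = m := by
  simp only [hasMaxChain_iff, forall_exists_index]
  exact forall₂_congr fun n m => ⟨fun h c hc d => h c d hc, fun h c d hc => h c hc d⟩

lemma exists_hasMaxChain [WellFoundedLT α] [WellFoundedGT α] (h : T ≤ U) :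
    ∃ n, HasMaxChain T U n := by
  obtain ⟨a, ha_zero, n, ha_n, ha⟩ := exists_covBy_seq_of_wellFoundedLT_wellFoundedGT_of_le h
  exact ⟨n, hasMaxChain_iff.2 ⟨fun i => a i, ha_zero, ha_n, fun i => ha i i.2⟩⟩

lemma _root_.IsCatenarianFromTo.of_hasMaxChain (h : IsCatenarianFromTo T U)
    (hVU : HasMaxChain V U n) : IsCatenarianFromTo T V :=
  isCatenarianFromTo_iff.2 fun _ _ hp hq =>
    Nat.add_right_cancel (isCatenarianFromTo_iff.1 h _ _ (hp.trans hVU) (hq.trans hVU))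

lemma wellFoundedLT_of_forall_isChain_finite (h : ∀ C : Set α, IsChain (· ≤ ·) C → C.Finite) :
    WellFoundedLT α := by
  refine ⟨RelEmbedding.wellFounded_iff_isEmpty.2 ⟨fun f => ?_⟩⟩
  have hf : StrictAnti f := fun _ _ => f.map_rel_iff.2
  exact Set.infinite_range_of_injective hf.injective (h _ hf.antitone.isChain_range)

lemma wellFoundedGT_of_forall_isChain_finite (h : ∀ C : Set α, IsChain (· ≤ ·) C → C.Finite) :
    WellFoundedGT α :=
  (wellFoundedLT_dual_iff α).1 <| wellFoundedLT_of_forall_isChain_finite fun C hC => h C hC.symm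

end PartialOrder

theorem isCatenarianFromTo_of_isModularLattice_Ici [Lattice α] {T U : α}
    [IsModularLattice (Set.Ici T)] : IsCatenarianFromTo T U := by
  intro n m c d hc hd
  let toSeries {k : ℕ} (e : Fin (k + 1) → α) (he : IsMaxChainFromTo T U k e) :
      CompositionSeries (Set.Ici T) :=
    have hmono : Monotone e := Fin.monotone_iff_le_succ.2 fun i => (he.2.2 i).le
    { length := k
      toFun i := ⟨e i, he.1.ge.trans (hmono i.zero_le)⟩
      step i := CovBy.of_image (OrderEmbedding.subtype _) (he.2.2 i) }
  exact (CompositionSeries.jordan_holder (toSeries c hc) (toSeries d hd)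
    (Subtype.ext (hc.1.trans hd.1.symm))
    (Subtype.ext (hc.2.1.trans hd.2.1.symm))).length_eq

end MaxChain

section Catenarian

variable {R S : Type*} [CommRing R] [CommRing S] [Algebra R S] {A B : Subalgebra R S} {n : ℕ}
  [WellFoundedLT (Subalgebra R S)]

theorem isCatenarianFromTo_intClosure_top :
    IsCatenarianFromTo (intClosure R S A) ⊤ := by
  have hclosed : IsIntClosedIn (intClosure R S A) ⊤ :=
    inf_le_right.trans ((intClosure R S).idempotent A).le
  have := (hclosed.isPrueferIn le_top).isModularLattice_Ici
  exact isCatenarianFromTo_of_isModularLattice_Ici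

theorem IsMinimalIntClosed.hasMaxChain_intClosure (hA : IsMinimalIntClosed A B)
    (h : HasMaxChain B (intClosure R S B) n) :
    HasMaxChain A (intClosure R S A) n ∧ intClosure R S A ⋖ intClosure R S B := by
  generalize hK : intClosure R S B = K at h
  induction h generalizing A with
  | refl B =>
    rw [hA.intClosure_eq_self hK]
    exact ⟨.refl A, hA.covBy⟩
  | @cons B C K n hBC hCK ih =>
    have hC : IsMinimalIntegral B C := ⟨hBC, hCK.le.trans hK.ge⟩
    obtain ⟨D, hD, hDC⟩ := hA.exchange hC
    obtain ⟨hchain, hcov⟩ := ih hDC (hC.intClosure_eq.trans hK)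
    rw [hD.intClosure_eq] at hchain hcov
    exact ⟨.cons hD.covBy hchain, hcov⟩

theorem HasMaxChain.exists_through_intClosure (h : HasMaxChain A ⊤ n) :
    ∃ p q, p + q = n ∧ HasMaxChain A (intClosure R S A) p ∧ HasMaxChain (intClosure R S A) ⊤ q := by
  generalize hU : (⊤ : Subalgebra R S) = U at h
  induction h with
  | refl A => exact ⟨0, 0, rfl, by subst hU; simpa using .refl _⟩
  | @cons A B _ _ hAB _ ih =>
    obtain ⟨p, q, rfl, hp, hq⟩ := ih hU
    rcases isMinimalIntClosed_or_isMinimalIntegral_of_covBy hAB with hclosed | hint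
    · obtain ⟨hp', hcov⟩ := hclosed.hasMaxChain_intClosure hp
      exact ⟨p, q + 1, rfl, hp', .cons hcov hq⟩
    · rw [hint.intClosure_eq] at hp hq
      exact ⟨p + 1, q, Nat.add_right_comm .., .cons hAB hp, hq⟩

theorem isCatenarianExt_of_isCatenarianFromTo_integralClosure
    (h : IsCatenarianFromTo ⊥ (integralClosure R S)) : IsCatenarianExt R S := by
  rw [← intClosure_bot, isCatenarianFromTo_iff] at h
  refine isCatenarianFromTo_iff.2 fun n m hn hm => ?_
  obtain ⟨p, q, rfl, hp, hq⟩ := hn.exists_through_intClosure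
  obtain ⟨p', q', rfl, hp', hq'⟩ := hm.exists_through_intClosure
  rw [h p p' hp hp', isCatenarianFromTo_iff.1 isCatenarianFromTo_intClosure_top q q' hq hq']

end Catenarian

end Catenarian

/-- An FCP extension `R ⊆ S` is catenarian iff `R ⊆ R̄` is catenarian,
where `R̄` is the integral closure of `R` in `S`. -/
theorem stmt_6 {R S : Type*} [CommRing R] [CommRing S] [Algebra R S]
    (hinj : Function.Injective (algebraMap R S)) (hFCP : IsFCPExt R S) :
    IsCatenarianExt R S ↔
      IsCatenarianFromTo (⊥ : Subalgebra R S) (integralClosure R S) := by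
  have := Catenarian.wellFoundedLT_of_forall_isChain_finite hFCP
  have := Catenarian.wellFoundedGT_of_forall_isChain_finite hFCP
  obtain ⟨n, hn⟩ := Catenarian.exists_hasMaxChain (le_top : integralClosure R S ≤ ⊤)
  exact ⟨fun h => h.of_hasMaxChain hn,
    Catenarian.isCatenarianExt_of_isCatenarianFromTo_integralClosure⟩
end

section
/- Every infra-integral FCP ring extension R ⊆ S is catenarian. -/
/-- The residual extension `κ_R(P) → κ_S(Q)` (for `P = Q ∩ R`) is an isomorphism. -/
def ResidualExtIsIso {R S : Type*} [CommRing R] [CommRing S] (f : R →+* S)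
    (Q : Ideal S) [Q.IsPrime] : Prop :=
  Function.Bijective
    (IsLocalRing.ResidueField.map
      (Localization.localRingHom (Q.comap f) Q f rfl))

/-- `R ⊆ S` is infra-integral: it is integral and all residual extensions
are isomorphisms. -/
def IsInfraIntegral (R S : Type*) [CommRing R] [CommRing S] [Algebra R S] : Prop :=
  Algebra.IsIntegral R S ∧
    ∀ (Q : Ideal S) (_ : Q.IsPrime), ResidualExtIsIso (algebraMap R S) Q

/-!
Every covering `T ⋖ U` of `R`-subalgebras of `S` turns out to be a covering of `R`-submodules, so
a maximal chain of subalgebras is a composition series of submodules, and the Jordan–Hölder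
theorem says that its length depends only on its end points.

To see this, let `A ⊂ B` be a minimal integral ring extension. By Nakayama's lemma its conductor
`M` is a maximal ideal of `A`. Let `Q` be a maximal ideal of `B` over `M`; as the residual extension
at `Q` is trivial, `B = A + Q`, and there is `x ∈ Q \ A`. By minimality `A + x²B` is `A` or `B`. If
it is `A`, then `x² ∈ A` (the ramified case). If it is `B`, then `x = t + ux²` with
`t ∈ A ∩ Q = M`, and `ux ∉ A` is idempotent modulo `MB ⊆ A` (the decomposed case). Either way
there is `z ∉ A` with `z² ∈ A + Az`, so that `B = A + Az`, and `B / A` is one-dimensional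
over `A / M = R / (M ∩ R)`.
-/

section ResidueField

variable {R S : Type*} [CommRing R] [CommRing S] [Algebra R S]

lemma ResidualExtIsIso.surjective_algebraMap_quotient {Q : Ideal S} [Q.IsMaximal]
    [(Q.comap (algebraMap R S)).IsMaximal] (h : ResidualExtIsIso (algebraMap R S) Q) :
    Function.Surjective (algebraMap R (S ⧸ Q)) := by
  intro q
  obtain ⟨s, rfl⟩ := Ideal.Quotient.mk_surjective q
  obtain ⟨k, hk⟩ := h.2 (algebraMap S Q.ResidueField s)
  obtain ⟨r, rfl⟩ := Ideal.algebraMap_residueField_surjective (Q.comap (algebraMap R S)) k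
  refine ⟨r, Q.injective_algebraMap_quotient_residueField ?_⟩
  exact (Ideal.ResidueField.map_algebraMap _ Q (algebraMap R S) rfl r).symm.trans hk

lemma exists_sub_algebraMap_mem {Q : Ideal S} (h : Function.Surjective (algebraMap R (S ⧸ Q)))
    (s : S) : ∃ r : R, s - algebraMap R S r ∈ Q := by
  obtain ⟨r, hr⟩ := h (Ideal.Quotient.mk Q s)
  exact ⟨r, Ideal.Quotient.eq.1 hr.symm⟩

lemma IsInfraIntegral.surjective_algebraMap_quotient (h : IsInfraIntegral R S) (Q : Ideal S)
    [hQ : Q.IsMaximal] : Function.Surjective (algebraMap R (S ⧸ Q)) := by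
  have := h.1
  have := Ideal.isMaximal_comap_of_isIntegral_of_isMaximal (R := R) Q
  exact (h.2 Q hQ.isPrime).surjective_algebraMap_quotient

lemma surjective_algebraMap_quotient_of_isIntegral {B : Type*} [CommRing B] [Algebra R B]
    [Algebra B S] [IsScalarTower R B S] [FaithfulSMul B S] [Algebra.IsIntegral B S]
    (hres : ∀ (Q : Ideal S) [Q.IsMaximal], Function.Surjective (algebraMap R (S ⧸ Q)))
    (P : Ideal B) [P.IsMaximal] : Function.Surjective (algebraMap R (B ⧸ P)) := by
  obtain ⟨Q, hQ, hQP⟩ := Ideal.exists_maximal_ideal_liesOver_of_isIntegral (S := S) P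
  intro p
  obtain ⟨b, rfl⟩ := Ideal.Quotient.mk_surjective p
  obtain ⟨r, hr⟩ := exists_sub_algebraMap_mem (hres Q) (algebraMap B S b)
  rw [IsScalarTower.algebraMap_apply R B S, ← map_sub, ← Ideal.mem_of_liesOver Q P] at hr
  exact ⟨r, (Ideal.Quotient.eq.2 hr).symm⟩

end ResidueField

lemma isCatenarianFromTo_of_map_covBy {α X : Type*} [PartialOrder α] [Lattice X]
    [IsModularLattice X] (f : α → X) (hf : ∀ {a b : α}, a ⋖ b → f a ⋖ f b) {T U : α} :
    IsCatenarianFromTo T U := by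
  rintro n m c d ⟨hc0, hcn, hc⟩ ⟨hd0, hdm, hd⟩
  let s : CompositionSeries X := ⟨n, f ∘ c, fun i => hf (hc i)⟩
  let t : CompositionSeries X := ⟨m, f ∘ d, fun i => hf (hd i)⟩
  have hhead : s.head = t.head := congrArg f (hc0.trans hd0.symm)
  have hlast : s.last = t.last := congrArg f (hcn.trans hdm.symm)
  exact (CompositionSeries.jordan_holder s t hhead hlast).length_eq

lemma covBy_sup_span_singleton_of_isMaximal_colon {A V : Type*} [CommRing A] [AddCommGroup V]
    [Module A V] {N : Submodule A V} {z : V} (h : (N.colon {z}).IsMaximal) : N ⋖ N ⊔ A ∙ z := by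
  have hz : z ∉ N := fun hz => (Ideal.ne_top_iff_one _).1 h.ne_top <|
    Submodule.mem_colon_singleton.2 (by rwa [one_smul])
  refine ⟨by simpa using hz, fun P hNP hP => hP.not_ge <| sup_le hNP.le ?_⟩
  obtain ⟨p, hpP, hpN⟩ := SetLike.exists_of_lt hNP
  obtain ⟨n, hn, w, hw, rfl⟩ := Submodule.mem_sup.1 (hP.le hpP)
  obtain ⟨c, rfl⟩ := Submodule.mem_span_singleton.1 hw
  have hczP : c • z ∈ P := (P.add_mem_iff_right (hNP.le hn)).1 hpP
  have hc : c ∉ N.colon {z} := fun hc => hpN (N.add_mem hn (Submodule.mem_colon_singleton.1 hc))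
  obtain ⟨d, m, hm, hdm⟩ := h.exists_inv hc
  have hzP : d • c • z + m • z ∈ P :=
    P.add_mem (P.smul_mem d hczP) (hNP.le (Submodule.mem_colon_singleton.1 hm))
  rwa [smul_smul, ← add_smul, hdm, one_smul, ← Submodule.span_singleton_le_iff_mem] at hzP

section MinimalExtension

variable (A B : Type*) [CommRing A] [CommRing B] [Algebra A B]

/-- The conductor `(A : B)` of a ring extension `A ⊆ B`, the largest ideal of `A` that is also an
ideal of `B`; the image of `A` in `B` is the `A`-submodule `1`. -/
def extConductor : Ideal A := (1 : Submodule A B).colon Set.univ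

variable {A B}

lemma mem_extConductor {a : A} : a ∈ extConductor A B ↔ ∀ b : B, a • b ∈ (1 : Submodule A B) := by
  simp [extConductor, Submodule.mem_colon]

variable [IsSimpleOrder (Subalgebra A B)]

variable (A B) in
lemma exists_notMem_one : ∃ b : B, b ∉ (1 : Submodule A B) := by
  obtain ⟨b, -, hb⟩ := SetLike.exists_of_lt (bot_lt_top (α := Subalgebra A B))
  exact ⟨b, by rwa [← Algebra.toSubmodule_bot]⟩

lemma le_one_or_one_sup_eq_top {J : Submodule A B} (hJ : J * J ≤ 1 ⊔ J) :
    J ≤ 1 ∨ 1 ⊔ J = ⊤ := by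
  have hmul : (1 ⊔ J) * (1 ⊔ J) ≤ 1 ⊔ J := by
    simp [Submodule.sup_mul, Submodule.mul_sup, hJ]
  let V : Subalgebra A B := (1 ⊔ J).toSubalgebra (Submodule.one_le.1 le_sup_left)
    fun x y hx hy => hmul (Submodule.mul_mem_mul hx hy)
  have hV : Subalgebra.toSubmodule V = 1 ⊔ J := Submodule.toSubalgebra_toSubmodule ..
  rcases eq_bot_or_eq_top V with h | h
  · left
    rw [← Algebra.toSubmodule_bot, ← h, hV]
    exact le_sup_right
  · right
    rw [← hV, h, Algebra.top_toSubmodule]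

lemma restrictScalars_le_one_or_one_sup_eq_top (I : Ideal B) :
    I.restrictScalars A ≤ 1 ∨ 1 ⊔ I.restrictScalars A = ⊤ :=
  le_one_or_one_sup_eq_top <| le_sup_of_le_right <|
    Submodule.mul_le.2 fun i _ _ hj => I.mul_mem_left i hj

variable (A B) in
lemma finite_of_isSimpleOrder_subalgebra [Algebra.IsIntegral A B] : Module.Finite A B := by
  obtain ⟨b, hb⟩ := exists_notMem_one A B
  have htop : Algebra.adjoin A {b} = ⊤ := (eq_bot_or_eq_top _).resolve_left fun h => hb <| by
    rw [← Algebra.toSubmodule_bot, ← h]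
    exact Algebra.self_mem_adjoin_singleton A b
  rw [Module.finite_def, ← Algebra.top_toSubmodule, ← htop]
  exact (Algebra.IsIntegral.isIntegral b).fg_adjoin_singleton

variable (A B) in
lemma isMaximal_extConductor [Algebra.IsIntegral A B] : (extConductor A B).IsMaximal := by
  have := finite_of_isSimpleOrder_subalgebra A B
  have hne : extConductor A B ≠ ⊤ := fun h => by
    obtain ⟨b, hb⟩ := exists_notMem_one A B
    have h1 : (1 : A) ∈ extConductor A B := h ▸ Submodule.mem_top
    exact hb (by simpa using mem_extConductor.1 h1 b)
  obtain ⟨M, hM, hle⟩ := Ideal.exists_le_maximal _ hne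
  have hM_dichotomy := restrictScalars_le_one_or_one_sup_eq_top (A := A) (M.map (algebraMap A B))
  rw [← Ideal.smul_top_eq_map] at hM_dichotomy
  rcases hM_dichotomy with h | h
  · have hMle : M ≤ extConductor A B := fun m hm => mem_extConductor.2 fun b =>
      h (Submodule.smul_mem_smul hm Submodule.mem_top)
    rwa [hle.antisymm hMle]
  · obtain ⟨r, hr, hrle⟩ := Submodule.exists_sub_one_mem_and_smul_le_of_fg_of_le_sup
      (Module.Finite.fg_top (R := A) (M := B)) le_rfl h.ge
    have hrM : r ∈ M := hle <| mem_extConductor.2 fun b =>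
      hrle (Submodule.smul_mem_pointwise_smul b r ⊤ Submodule.mem_top)
    exact absurd ((M.eq_top_iff_one).2 (by simpa using M.sub_mem hrM hr)) hM.ne_top

lemma exists_mem_notMem_one {Q : Ideal B} (hres : Function.Surjective (algebraMap A (B ⧸ Q))) :
    ∃ x ∈ Q, x ∉ (1 : Submodule A B) := by
  obtain ⟨y, hy⟩ := exists_notMem_one A B
  obtain ⟨a, ha⟩ := exists_sub_algebraMap_mem hres y
  refine ⟨y - algebraMap A B a, ha, fun h => hy ?_⟩
  simpa using add_mem h (Submodule.algebraMap_mem a)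

lemma exists_sq_mem_one_sup_span_singleton {Q : Ideal B}
    (hres : Function.Surjective (algebraMap A (B ⧸ Q)))
    (hQ : Q.comap (algebraMap A B) ≤ extConductor A B) :
    ∃ z ∉ (1 : Submodule A B), z ^ 2 ∈ 1 ⊔ A ∙ z := by
  obtain ⟨x, hxQ, hx1⟩ := exists_mem_notMem_one hres
  rcases restrictScalars_le_one_or_one_sup_eq_top (A := A) (Ideal.span {x ^ 2}) with h | h
  · exact ⟨x, hx1, Submodule.mem_sup_left (h (Ideal.mem_span_singleton_self (x ^ 2)))⟩
  · obtain ⟨t', ht', j, hj, hxj⟩ := Submodule.mem_sup.1 (h.ge (Submodule.mem_top (x := x)))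
    obtain ⟨t, rfl⟩ := Submodule.mem_one.1 ht'
    obtain ⟨u, rfl⟩ := Ideal.mem_span_singleton'.1 hj
    have ht : t ∈ Q.comap (algebraMap A B) := by
      have : algebraMap A B t = (1 - u * x) * x := by linear_combination hxj
      exact Ideal.mem_comap.2 (this ▸ Q.mul_mem_left _ hxQ)
    refine ⟨u * x, fun hux => hx1 ?_, ?_⟩
    · obtain ⟨e, he⟩ := Submodule.mem_one.1 hux
      have heQ : e ∈ Q.comap (algebraMap A B) := Ideal.mem_comap.2 (he ▸ Q.mul_mem_left u hxQ)
      have hxe : x = algebraMap A B t + e • x := by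
        rw [Algebra.smul_def, he]
        linear_combination -hxj
      rw [hxe]
      exact add_mem (Submodule.algebraMap_mem t) (mem_extConductor.1 (hQ heQ) x)
    · have hsq : (u * x) ^ 2 = -(t • u) + u * x := by
        rw [Algebra.smul_def]
        linear_combination u * hxj
      rw [hsq]
      exact add_mem (Submodule.mem_sup_left (neg_mem (mem_extConductor.1 (hQ ht) u)))
        (Submodule.mem_sup_right (Submodule.mem_span_singleton_self _))

lemma one_sup_span_singleton_eq_top {z : B} (hz : z ∉ (1 : Submodule A B))
    (hz2 : z ^ 2 ∈ 1 ⊔ A ∙ z) : 1 ⊔ A ∙ z = ⊤ := by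
  have hmul : (A ∙ z) * (A ∙ z) ≤ 1 ⊔ A ∙ z := by
    rwa [Submodule.span_mul_span, Set.singleton_mul_singleton, ← sq,
      Submodule.span_singleton_le_iff_mem]
  exact (le_one_or_one_sup_eq_top hmul).resolve_left fun h =>
    hz (h (Submodule.mem_span_singleton_self z))

variable (A B) in
lemma exists_isMaximal_comap_eq_extConductor [Algebra.IsIntegral A B] :
    ∃ Q : Ideal B, Q.IsMaximal ∧ Q.comap (algebraMap A B) = extConductor A B := by
  have := isMaximal_extConductor A B
  refine Ideal.exists_ideal_over_maximal_of_isIntegral _ fun a ha => mem_extConductor.2 fun b => ?_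
  simp [Algebra.smul_def, RingHom.mem_ker.1 ha]

lemma isCoatom_one [Algebra.IsIntegral A B]
    (hres : ∀ (Q : Ideal B) [Q.IsMaximal], Function.Surjective (algebraMap A (B ⧸ Q))) :
    IsCoatom (1 : Submodule A B) := by
  have hM := isMaximal_extConductor A B
  obtain ⟨Q, hQ, hQM⟩ := exists_isMaximal_comap_eq_extConductor A B
  obtain ⟨z, hz, hz2⟩ := exists_sq_mem_one_sup_span_singleton (hres Q) hQM.le
  have hcolon_ne_top : (1 : Submodule A B).colon {z} ≠ ⊤ := fun h => hz (by simpa using h)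
  have hcolon : extConductor A B = (1 : Submodule A B).colon {z} :=
    hM.eq_of_le hcolon_ne_top (Submodule.colon_mono le_rfl (Set.subset_univ _))
  rw [← covBy_top_iff, ← one_sup_span_singleton_eq_top hz hz2]
  exact covBy_sup_span_singleton_of_isMaximal_colon (hcolon ▸ hM)

end MinimalExtension

section Tower

variable {R A B : Type*} [CommRing R] [CommRing A] [CommRing B] [Algebra R A] [Algebra R B]
  [Algebra A B] [IsScalarTower R A B] [IsSimpleOrder (Subalgebra A B)] [Algebra.IsIntegral A B]

lemma exists_sub_algebraMap_mem_extConductor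
    (hres : ∀ (Q : Ideal B) [Q.IsMaximal], Function.Surjective (algebraMap R (B ⧸ Q))) (a : A) :
    ∃ r : R, a - algebraMap R A r ∈ extConductor A B := by
  obtain ⟨Q, hQ, hQM⟩ := exists_isMaximal_comap_eq_extConductor A B
  obtain ⟨r, hr⟩ := exists_sub_algebraMap_mem (hres Q) (algebraMap A B a)
  rw [IsScalarTower.algebraMap_apply R A B, ← map_sub, ← Ideal.mem_comap, hQM] at hr
  exact ⟨r, hr⟩

lemma isCoatom_restrictScalars_one
    (hres : ∀ (Q : Ideal B) [Q.IsMaximal], Function.Surjective (algebraMap R (B ⧸ Q))) :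
    IsCoatom ((1 : Submodule A B).restrictScalars R) := by
  have hcoatom : IsCoatom (1 : Submodule A B) := isCoatom_one fun Q _ => by
    have h := hres Q
    rw [IsScalarTower.algebraMap_eq R A (B ⧸ Q)] at h
    exact Function.Surjective.of_comp h
  refine ⟨by simpa using hcoatom.1, fun N hN => ?_⟩
  have hsmul (a : A) {b : B} (hb : b ∈ N) : a • b ∈ N := by
    obtain ⟨r, hr⟩ := exists_sub_algebraMap_mem_extConductor hres a
    have hsub : (a - algebraMap R A r) • b ∈ N := hN.le (mem_extConductor.1 hr b)
    rw [sub_smul, algebraMap_smul] at hsub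
    exact (N.sub_mem_iff_left (N.smul_mem r hb)).1 hsub
  let N' : Submodule A B := { N with smul_mem' := fun a _ hb => hsmul a hb }
  have hN' : N' = ⊤ := hcoatom.2 N' hN
  exact eq_top_iff.2 fun b _ => hN'.ge (Submodule.mem_top (x := b))

end Tower

section Covering

variable {R S : Type*} [CommRing R] [CommRing S] [Algebra R S]

lemma isSimpleOrder_subalgebra_of_isCoatom {T : Subalgebra R S} (h : IsCoatom T) :
    IsSimpleOrder (Subalgebra T S) := by
  have hbot : (⊥ : Subalgebra T S).restrictScalars R = T := by
    ext; simp [Algebra.mem_bot]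
  refine isSimpleOrder_iff_isCoatom_bot.2 ⟨fun hbot_eq_top => h.1 ?_, fun V hV => ?_⟩
  · rw [← hbot, hbot_eq_top, Subalgebra.restrictScalars_top]
  · have hTV : (⊥ : Subalgebra T S).restrictScalars R < V.restrictScalars R :=
      lt_of_le_of_ne (fun x hx => hV.le hx)
        fun heq => hV.ne (Subalgebra.restrictScalars_injective R heq)
    apply Subalgebra.restrictScalars_injective R
    rw [Subalgebra.restrictScalars_top]
    exact h.2 _ (hbot.symm.trans_lt hTV)

variable {T U : Subalgebra R S}

lemma isCoatom_comap_val (h : T ⋖ U) : IsCoatom (T.comap U.val) := by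
  let mapVal : Subalgebra R U ↪o Subalgebra R S :=
    OrderEmbedding.ofMapLEIff (Subalgebra.map U.val) fun V W => by
      rw [Subalgebra.map_le, Subalgebra.comap_map_eq_self_of_injective Subtype.val_injective]
  have hT : mapVal (T.comap U.val) = T :=
    Subalgebra.map_comap_eq_self (by simpa only [Subalgebra.range_val] using h.le)
  have hU : mapVal ⊤ = U := by simp [mapVal, Subalgebra.range_val]
  exact covBy_top_iff.1 (CovBy.of_image mapVal (by rwa [hT, hU]))

lemma toSubmodule_covBy_toSubmodule [Algebra.IsIntegral R S]
    (hres : ∀ (Q : Ideal S) [Q.IsMaximal], Function.Surjective (algebraMap R (S ⧸ Q)))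
    (h : T ⋖ U) : Subalgebra.toSubmodule T ⋖ Subalgebra.toSubmodule U := by
  have := isSimpleOrder_subalgebra_of_isCoatom (isCoatom_comap_val h)
  have : Algebra.IsIntegral R U := .of_injective U.val Subtype.val_injective
  have : Algebra.IsIntegral (T.comap U.val) U := .tower_top R
  have : Algebra.IsIntegral U S := .tower_top R
  have hcoatom := isCoatom_restrictScalars_one (R := R) (A := T.comap U.val) (B := U)
    (surjective_algebraMap_quotient_of_isIntegral hres)
  rw [Subalgebra.restrictScalars_one] at hcoatom
  rw [covBy_iff_quot_is_simple h.le, isSimpleModule_iff_isCoatom]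
  exact hcoatom

end Covering

theorem stmt_10_general {R S : Type*} [CommRing R] [CommRing S] [Algebra R S]
    [Algebra.IsIntegral R S]
    (hres : ∀ (Q : Ideal S) [Q.IsMaximal], Function.Surjective (algebraMap R (S ⧸ Q)))
    (T U : Subalgebra R S) : IsCatenarianFromTo T U :=
  isCatenarianFromTo_of_map_covBy Subalgebra.toSubmodule (toSubmodule_covBy_toSubmodule hres)

/-- Every infra-integral FCP ring extension is catenarian. -/
theorem stmt_10 {R S : Type*} [CommRing R] [CommRing S] [Algebra R S]
    (hinj : Function.Injective (algebraMap R S)) (hFCP : IsFCPExt R S)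
    (hinfra : IsInfraIntegral R S) :
    IsCatenarianExt R S := by
  have := hinfra.1
  exact stmt_10_general (fun Q _ => hinfra.surjective_algebraMap_quotient Q) ⊥ ⊤
end
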